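/- Fix a real α with 0 < α < 1. For φ ∈ (0, π) define u(φ) := [2·sin((π−φ)/(1+α))/(1+α)] · Θ_{1/α}(φ)^{2α+1} · (d(φ)² − 1), w(φ) := [2·sin φ/(1+α)²] · Θ_{1/α}(φ)^{4α+1} · [ (d(φ)² − 1)·cos((π−φ)/(1+1/α)) − 2·d(φ)·sin((π−φ)/(1+1/α)) ], and s(φ) := Θ_{1/α}(φ)^α · Θ_α(φ). Then there exists ε₀ > 0 such that for every φ ∈ (0, ε₀): u(φ) > 0 and 0 < w(φ)/(u(φ)·s(φ)) < 1. -/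

import Mathlib

open Real Set

/-- `Th α t = sin t / ((1+α)·sin((π−t)/(1+α)))`; `Th (1/α)` is `Θ_{1/α}`. -/
noncomputable def Th (α t : ℝ) : ℝ :=
  Real.sin t / ((1 + α) * Real.sin ((Real.pi - t) / (1 + α)))

/-- `dfun α φ = (1+α)·cot φ + α·cot((π−φ)/(1+1/α))`. -/
noncomputable def dfun (α φ : ℝ) : ℝ :=
  (1 + α) * Real.cot φ + α * Real.cot ((Real.pi - φ) / (1 + 1/α))

/-- `ufun α φ = [2·sin((π−φ)/(1+α))/(1+α)] · Θ_{1/α}(φ)^{2α+1} · (d(φ)² − 1)`. -/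
noncomputable def ufun (α φ : ℝ) : ℝ :=
  (2 * Real.sin ((Real.pi - φ) / (1 + α)) / (1 + α)) * (Th (1/α) φ) ^ (2*α + 1) *
    ((dfun α φ)^2 - 1)

/-- `wfun α φ = [2·sin φ/(1+α)²] · Θ_{1/α}(φ)^{4α+1} ·
    [(d(φ)² − 1)·cos((π−φ)/(1+1/α)) − 2·d(φ)·sin((π−φ)/(1+1/α))]`. -/
noncomputable def wfun (α φ : ℝ) : ℝ :=
  (2 * Real.sin φ / (1 + α)^2) * (Th (1/α) φ) ^ (4*α + 1) *
    (((dfun α φ)^2 - 1) * Real.cos ((Real.pi - φ) / (1 + 1/α)) -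
      2 * dfun α φ * Real.sin ((Real.pi - φ) / (1 + 1/α)))

/-- `sfun α φ = Θ_{1/α}(φ)^α · Θ_α(φ)`. -/
noncomputable def sfun (α φ : ℝ) : ℝ := (Th (1/α) φ) ^ α * Th α φ

/-! As `φ → 0⁺`, `d(φ) → ∞`, hence `u > 0`, and `Θ_{1/α}(φ) → 0⁺`. Cancelling common factors gives
`w / (u s) = Θ_{1/α}(φ) ^ α * (cos β - 2 d(φ) / (d(φ) ^ 2 - 1) * sin β)` with
`β = (π - φ) / (1 + 1 / α)`. The bracket tends to `cos (π / (1 + 1 / α))`, which is positive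
because `α < 1`, so the quotient tends to `0` through positive values. -/

open Filter Topology

section Limits

theorem tendsto_two_mul_div_sq_sub_one_atTop :
    Tendsto (fun x : ℝ ↦ 2 * x / (x ^ 2 - 1)) atTop (𝓝 0) := by
  have hpartial : ∀ᶠ x : ℝ in atTop, (x - 1)⁻¹ + (x + 1)⁻¹ = 2 * x / (x ^ 2 - 1) := by
    filter_upwards [eventually_gt_atTop 1] with x hx
    have hsub_ne : x - 1 ≠ 0 := by linarith
    have hadd_ne : x + 1 ≠ 0 := by linarith
    have hfactor : x ^ 2 - 1 = (x - 1) * (x + 1) := by ring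
    rw [hfactor]
    field_simp
    ring
  have hsub : Tendsto (fun x : ℝ ↦ (x - 1)⁻¹) atTop (𝓝 0) :=
    (tendsto_atTop_add_const_right _ (-1) tendsto_id).inv_tendsto_atTop
  have hadd : Tendsto (fun x : ℝ ↦ (x + 1)⁻¹) atTop (𝓝 0) :=
    (tendsto_atTop_add_const_right _ 1 tendsto_id).inv_tendsto_atTop
  simpa only [add_zero] using (hsub.add hadd).congr' hpartial

theorem tendsto_sin_nhdsGT_zero : Tendsto sin (𝓝[>] 0) (𝓝[>] 0) := by
  refine tendsto_nhdsWithin_iff.2 ⟨?_, ?_⟩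
  · simpa only [sin_zero] using continuous_sin.continuousWithinAt.tendsto (x := 0)
  · filter_upwards [Ioo_mem_nhdsGT pi_pos] with φ hφ using sin_pos_of_mem_Ioo hφ

theorem tendsto_cot_nhdsGT_zero : Tendsto cot (𝓝[>] 0) atTop := by
  have hcos : Tendsto cos (𝓝[>] 0) (𝓝 1) := by
    simpa only [cos_zero] using continuous_cos.continuousWithinAt.tendsto (x := 0)
  refine (hcos.pos_mul_atTop one_pos tendsto_sin_nhdsGT_zero.inv_tendsto_nhdsGT_zero).congr ?_
  exact fun φ ↦ by rw [cot_eq_cos_div_sin, div_eq_mul_inv, Pi.inv_apply]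

end Limits

section Angles

variable {α φ : ℝ}

theorem sin_pi_sub_div_one_add_pos (hα : 0 < α) (hφ : φ ∈ Ico 0 π) :
    0 < sin ((π - φ) / (1 + α)) := by
  have hnum : 0 < π - φ := sub_pos.2 hφ.2
  refine sin_pos_of_pos_of_lt_pi (by positivity) ?_
  rw [div_lt_iff₀ (by positivity)]
  nlinarith [hφ.1, mul_pos pi_pos hα]

theorem sin_pi_div_one_add_pos (hα : 0 < α) : 0 < sin (π / (1 + α)) := by
  simpa only [sub_zero] using sin_pi_sub_div_one_add_pos hα (left_mem_Ico.2 pi_pos)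

theorem cos_pi_div_one_add_pos (hα : 1 < α) : 0 < cos (π / (1 + α)) := by
  have hden : 0 < 1 + α := by linarith
  refine cos_pos_of_mem_Ioo ⟨by linarith [pi_pos, div_pos pi_pos hden], ?_⟩
  exact div_lt_div_of_pos_left pi_pos two_pos (by linarith)

theorem tendsto_comp_pi_sub_div_nhdsGT_zero {X : Type*} [TopologicalSpace X] {f : ℝ → X}
    (hf : Continuous f) (c : ℝ) :
    Tendsto (fun φ ↦ f ((π - φ) / c)) (𝓝[>] 0) (𝓝 (f (π / c))) := by
  have hcont : Continuous fun φ ↦ f ((π - φ) / c) := by fun_prop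
  simpa only [sub_zero] using hcont.continuousWithinAt.tendsto (x := 0)

end Angles

section Asymptotics

variable {α φ : ℝ}

theorem Th_pos (hα : 0 < α) (hφ : φ ∈ Ioo 0 π) : 0 < Th α φ :=
  div_pos (sin_pos_of_mem_Ioo hφ)
    (mul_pos (by positivity) (sin_pi_sub_div_one_add_pos hα (Ioo_subset_Ico_self hφ)))

theorem tendsto_Th_nhdsGT_zero (hα : 0 < α) : Tendsto (Th α) (𝓝[>] 0) (𝓝[>] 0) := by
  refine tendsto_nhdsWithin_iff.2 ⟨?_, ?_⟩
  · have hsin := sin_pi_div_one_add_pos hα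
    have hden : Tendsto (fun φ ↦ (1 + α) * sin ((π - φ) / (1 + α))) (𝓝[>] 0)
        (𝓝 ((1 + α) * sin (π / (1 + α)))) :=
      (tendsto_comp_pi_sub_div_nhdsGT_zero continuous_sin _).const_mul _
    have hden_ne : (1 + α) * sin (π / (1 + α)) ≠ 0 := by positivity
    have hnum : Tendsto sin (𝓝[>] 0) (𝓝 0) := tendsto_sin_nhdsGT_zero.mono_right nhdsWithin_le_nhds
    have hquot := hnum.div hden hden_ne
    rwa [zero_div] at hquot
  · filter_upwards [Ioo_mem_nhdsGT pi_pos] with φ hφ using Th_pos hα hφ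

theorem tendsto_Th_rpow_nhdsGT_zero {p : ℝ} (hα : 0 < α) (hp : 0 < p) :
    Tendsto (fun φ ↦ Th α φ ^ p) (𝓝[>] 0) (𝓝 0) := by
  have hTh := (tendsto_Th_nhdsGT_zero hα).mono_right nhdsWithin_le_nhds
  simpa only [zero_rpow hp.ne'] using hTh.rpow_const (Or.inr hp.le)

theorem tendsto_dfun_nhdsGT_zero (hα : 0 < α) : Tendsto (dfun α) (𝓝[>] 0) atTop := by
  have hsin := tendsto_comp_pi_sub_div_nhdsGT_zero continuous_sin (1 + 1 / α)
  have hcos := tendsto_comp_pi_sub_div_nhdsGT_zero continuous_cos (1 + 1 / α)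
  have hsin_ne : sin (π / (1 + 1 / α)) ≠ 0 := (sin_pi_div_one_add_pos (one_div_pos.2 hα)).ne'
  have hcot : Tendsto (fun φ ↦ cot ((π - φ) / (1 + 1 / α))) (𝓝[>] 0)
      (𝓝 (cos (π / (1 + 1 / α)) / sin (π / (1 + 1 / α)))) := by
    simp only [cot_eq_cos_div_sin]
    exact hcos.div hsin hsin_ne
  exact (tendsto_cot_nhdsGT_zero.const_mul_atTop (by positivity)).atTop_add (hcot.const_mul α)

theorem ufun_pos (hα : 0 < α) (hφ : φ ∈ Ioo 0 π) (hd : 1 < dfun α φ ^ 2) :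
    0 < ufun α φ := by
  have hsin := sin_pi_sub_div_one_add_pos hα (Ioo_subset_Ico_self hφ)
  have hTh := rpow_pos_of_pos (Th_pos (one_div_pos.2 hα) hφ) (2 * α + 1)
  unfold ufun
  positivity

theorem wfun_div_ufun_mul_sfun (hα : 0 < α) (hφ : φ ∈ Ioo 0 π) (hd : dfun α φ ^ 2 ≠ 1) :
    wfun α φ / (ufun α φ * sfun α φ) =
      Th (1 / α) φ ^ α * (cos ((π - φ) / (1 + 1 / α)) -
        2 * dfun α φ / (dfun α φ ^ 2 - 1) * sin ((π - φ) / (1 + 1 / α))) := by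
  have hTh := Th_pos (one_div_pos.2 hα) hφ
  have hsplit : Th (1 / α) φ ^ (4 * α + 1) =
      Th (1 / α) φ ^ (2 * α + 1) * Th (1 / α) φ ^ α * Th (1 / α) φ ^ α := by
    rw [← rpow_add hTh, ← rpow_add hTh]
    ring_nf
  have hsin : sin φ ≠ 0 := (sin_pos_of_mem_Ioo hφ).ne'
  have hsin' : sin ((π - φ) / (1 + α)) ≠ 0 :=
    (sin_pi_sub_div_one_add_pos hα (Ioo_subset_Ico_self hφ)).ne'
  have hTh_eq : Th α φ = sin φ / ((1 + α) * sin ((π - φ) / (1 + α))) := rfl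
  rw [wfun, ufun, sfun, hsplit, hTh_eq]
  field_simp

theorem tendsto_wfun_div_ufun_mul_sfun_nhdsGT_zero (hα0 : 0 < α) (hα1 : α < 1) :
    Tendsto (fun φ ↦ wfun α φ / (ufun α φ * sfun α φ)) (𝓝[>] 0) (𝓝[>] 0) := by
  have hd := tendsto_dfun_nhdsGT_zero hα0
  have hcos := tendsto_comp_pi_sub_div_nhdsGT_zero continuous_cos (1 + 1 / α)
  have hsin := tendsto_comp_pi_sub_div_nhdsGT_zero continuous_sin (1 + 1 / α)
  have hbracket : Tendsto (fun φ ↦ cos ((π - φ) / (1 + 1 / α)) -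
      2 * dfun α φ / (dfun α φ ^ 2 - 1) * sin ((π - φ) / (1 + 1 / α)))
      (𝓝[>] 0) (𝓝 (cos (π / (1 + 1 / α)))) := by
    simpa only [zero_mul, sub_zero, Function.comp_apply] using
      hcos.sub ((tendsto_two_mul_div_sq_sub_one_atTop.comp hd).mul hsin)
  have hprod := (tendsto_Th_rpow_nhdsGT_zero (one_div_pos.2 hα0) hα0).mul hbracket
  rw [zero_mul] at hprod
  have hbracket_pos := hbracket.eventually_const_lt
    (cos_pi_div_one_add_pos (one_lt_one_div hα0 hα1))
  refine Tendsto.congr' ?_ (tendsto_nhdsWithin_iff.2 ⟨hprod, ?_⟩)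
  · filter_upwards [Ioo_mem_nhdsGT pi_pos, hd.eventually_gt_atTop 1] with φ hφ hdφ
    exact (wfun_div_ufun_mul_sfun hα0 hφ (one_lt_pow₀ hdφ two_ne_zero).ne').symm
  · filter_upwards [Ioo_mem_nhdsGT pi_pos, hbracket_pos] with φ hφ hpos
    exact mul_pos (rpow_pos_of_pos (Th_pos (one_div_pos.2 hα0) hφ) _) hpos

end Asymptotics

theorem stmt19 (α : ℝ) (hα0 : 0 < α) (hα1 : α < 1) :
    ∃ ε₀ > 0, ∀ φ ∈ Set.Ioo (0:ℝ) ε₀,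
      0 < ufun α φ ∧ wfun α φ / (ufun α φ * sfun α φ) ∈ Set.Ioo (0:ℝ) 1 := by
  have hu : ∀ᶠ φ in 𝓝[>] 0, 0 < ufun α φ := by
    filter_upwards [Ioo_mem_nhdsGT pi_pos,
      (tendsto_dfun_nhdsGT_zero hα0).eventually_gt_atTop 1] with φ hφ hd
    exact ufun_pos hα0 hφ (one_lt_pow₀ hd two_ne_zero)
  have hratio : ∀ᶠ φ in 𝓝[>] 0, wfun α φ / (ufun α φ * sfun α φ) ∈ Ioo (0 : ℝ) 1 :=
    tendsto_wfun_div_ufun_mul_sfun_nhdsGT_zero hα0 hα1 (Ioo_mem_nhdsGT one_pos)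
  exact mem_nhdsGT_iff_exists_Ioo_subset.1 (hu.and hratio)
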